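/- arXiv:2410.22264 — 8 statements merged into one kernel-verified Lean document; each statement's English description precedes it below -/
import Mathlib

section
/- Let d, k, T be positive integers with kT ≤ d, A* ∈ ℝ^{d×d}, and U_t* ∈ ℝ^{d×k} for t = 1,…,T satisfying the task-diversity assumption. If Â_SR ∈ ℝ^{d×d} minimizes the standard retraining objective A ↦ (1/2)·Σ_{t=1}^T ‖A* + U_t*(U_t*)ᵀ − A‖_F², then rank(Â_SR − A*) = kT. -/
/-!
The matrix minimizing a sum of squared Frobenius distances to given matrices is their mean, so
`Â_SR - A*` is the mean of the `Uₜ* (Uₜ*)ᵀ`. Up to the factor `1 / T` this is `W Wᵀ` for the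
concatenation `W = [U₁* ⋯ U_T*]`, and over `ℝ` the matrix `W Wᵀ` has the same rank as `W`.
-/

open Matrix BigOperators

noncomputable section

/-- Squared Frobenius norm of a real matrix. -/
def frobSq {m n : Type*} [Fintype m] [Fintype n] (M : Matrix m n ℝ) : ℝ :=
  ∑ i, ∑ j, (M i j) ^ 2

open scoped RealInnerProductSpace

section InnerProductSpace

variable {ι V : Type*} [Fintype ι] [NormedAddCommGroup V] [InnerProductSpace ℝ V] [Module ℚ≥0 V]

theorem sum_norm_sub_sq_eq_sum_norm_sub_expect_sq_add (x : ι → V) (a : V) :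
    ∑ t, ‖x t - a‖ ^ 2 =
      ∑ t, ‖x t - 𝔼 s, x s‖ ^ 2 + Fintype.card ι * ‖𝔼 s, x s - a‖ ^ 2 := by
  set μ := 𝔼 s, x s
  have sum_deviation : ∑ t, (x t - μ) = 0 := by
    rw [Finset.sum_sub_distrib, Finset.sum_const, Finset.card_univ, Fintype.card_smul_expect,
      sub_self]
  calc ∑ t, ‖x t - a‖ ^ 2
      = ∑ t, (‖x t - μ‖ ^ 2 + 2 * ⟪x t - μ, μ - a⟫ + ‖μ - a‖ ^ 2) := by
        simp only [← norm_add_sq_real, sub_add_sub_cancel]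
    _ = ∑ t, ‖x t - μ‖ ^ 2 + 2 * ⟪∑ t, (x t - μ), μ - a⟫ + Fintype.card ι * ‖μ - a‖ ^ 2 := by
        simp only [Finset.sum_add_distrib, ← Finset.mul_sum, sum_inner, Finset.sum_const,
          Finset.card_univ, nsmul_eq_mul]
    _ = ∑ t, ‖x t - μ‖ ^ 2 + Fintype.card ι * ‖μ - a‖ ^ 2 := by
        rw [sum_deviation, inner_zero_left, mul_zero, add_zero]

theorem eq_expect_of_sum_norm_sub_sq_le [Nonempty ι] {x : ι → V} {a : V}
    (h : ∑ t, ‖x t - a‖ ^ 2 ≤ ∑ t, ‖x t - 𝔼 s, x s‖ ^ 2) : a = 𝔼 s, x s := by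
  rw [sum_norm_sub_sq_eq_sum_norm_sub_expect_sq_add, add_le_iff_nonpos_right] at h
  have card_pos : (0 : ℝ) < Fintype.card ι := Nat.cast_pos.2 Fintype.card_pos
  have norm_sq_nonpos : ‖𝔼 s, x s - a‖ ^ 2 ≤ 0 := nonpos_of_mul_nonpos_right h card_pos
  exact (norm_sub_eq_zero_iff.1 (sq_nonpos_iff _ |>.1 norm_sq_nonpos)).symm

end InnerProductSpace

section Frobenius

variable {ι m n : Type*} [Fintype ι] [Fintype m] [Fintype n]

/-- Matrices as vectors of their entries in Euclidean space. It carries `frobSq` to the squared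
norm of an inner product space. -/
def entriesEquivEuclidean (m n : Type*) : Matrix m n ℝ ≃ₗ[ℝ] EuclideanSpace ℝ (m × n) :=
  (LinearEquiv.curry ℝ ℝ m n).symm ≪≫ₗ (WithLp.linearEquiv 2 ℝ (m × n → ℝ)).symm

theorem norm_entriesEquivEuclidean_sq (M : Matrix m n ℝ) :
    ‖entriesEquivEuclidean m n M‖ ^ 2 = frobSq M := by
  simp only [EuclideanSpace.norm_sq_eq, Real.norm_eq_abs, sq_abs, Fintype.sum_prod_type]
  rfl

theorem eq_expect_of_sum_frobSq_sub_le [Nonempty ι] {B : ι → Matrix m n ℝ} {A : Matrix m n ℝ}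
    (h : ∑ t, frobSq (B t - A) ≤ ∑ t, frobSq (B t - 𝔼 s, B s)) : A = 𝔼 s, B s := by
  let e := entriesEquivEuclidean m n
  have map_mean : e (𝔼 s, B s) = 𝔼 s, e (B s) :=
    map_expect (e.toLinearMap.restrictScalars ℚ≥0) B Finset.univ
  simp only [← norm_entriesEquivEuclidean_sq, map_sub] at h
  rw [map_mean] at h
  exact e.injective ((eq_expect_of_sum_norm_sub_sq_le h).trans map_mean.symm)

end Frobenius

section Concatenation

variable {ι m n R : Type*}

/-- The concatenation `[U₁ ⋯ U_T]` of a family of matrices with the same rows: its column `(t, j)`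
is column `j` of `U t`. -/
def hconcat (U : ι → Matrix m n R) : Matrix m (ι × n) R :=
  Matrix.of fun i p => U p.1 i p.2

theorem hconcat_mul_transpose_self [Fintype ι] [Fintype n] [NonUnitalNonAssocSemiring R]
    (U : ι → Matrix m n R) : hconcat U * (hconcat U)ᵀ = ∑ t, U t * (U t)ᵀ := by
  ext i j
  simp [hconcat, Matrix.sum_apply, Matrix.mul_apply, Fintype.sum_prod_type]

end Concatenation

theorem rank_expect {ι m n K : Type*} [Fintype ι] [Nonempty ι] [Fintype n] [Field K] [CharZero K]
    (B : ι → Matrix m n K) : (𝔼 t, B t).rank = (∑ t, B t).rank := by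
  have card_ne_zero : (Fintype.card ι : K) ≠ 0 := Nat.cast_ne_zero.2 Fintype.card_ne_zero
  rw [← Fintype.card_smul_expect, ← Nat.cast_smul_eq_nsmul K,
    Matrix.rank_smul_of_mem_nonZeroDivisors _ (mem_nonZeroDivisors_of_ne_zero card_ne_zero)]

section Retraining

variable {ι m n : Type*} [Fintype ι] [Fintype m] [Fintype n]

/-- The standard retraining objective `A ↦ ½ ∑ₜ ‖A* + Uₜ* (Uₜ*)ᵀ - A‖_F²`. -/
def standardRetrainingObjective (Astar : Matrix m m ℝ) (Ustar : ι → Matrix m n ℝ)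
    (A : Matrix m m ℝ) : ℝ :=
  (1 / 2) * ∑ t, frobSq (Astar + Ustar t * (Ustar t)ᵀ - A)

variable [Nonempty ι] {Astar Asr : Matrix m m ℝ} {Ustar : ι → Matrix m n ℝ}

theorem sub_eq_expect_of_standardRetrainingObjective_le
    (hmin : ∀ A, standardRetrainingObjective Astar Ustar Asr ≤
      standardRetrainingObjective Astar Ustar A) :
    Asr - Astar = 𝔼 t, Ustar t * (Ustar t)ᵀ := by
  have mean_eq : Asr = 𝔼 t, (Astar + Ustar t * (Ustar t)ᵀ) :=
    eq_expect_of_sum_frobSq_sub_le (le_of_mul_le_mul_left (hmin _) one_half_pos)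
  rw [mean_eq, Finset.expect_add_distrib, Fintype.expect_const, add_sub_cancel_left]

theorem standard_retraining_rank_error_general
    (hmin : ∀ A, standardRetrainingObjective Astar Ustar Asr ≤
      standardRetrainingObjective Astar Ustar A) :
    (Asr - Astar).rank = (hconcat Ustar).rank := by
  rw [sub_eq_expect_of_standardRetrainingObjective_le hmin, rank_expect,
    ← hconcat_mul_transpose_self, Matrix.rank_self_mul_transpose]

end Retraining

/-- Theorem 1 (standard retraining recovery error): if `Â_SR` minimizes the standard
retraining objective and the task-diversity assumption holds, then
`rank(Â_SR − A*) = kT`. -/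
theorem standard_retraining_rank_error
    (d k T : ℕ) (hd : 0 < d) (hk : 0 < k) (hT : 0 < T) (hkT : k * T ≤ d)
    (Astar : Matrix (Fin d) (Fin d) ℝ)
    (Ustar : Fin T → Matrix (Fin d) (Fin k) ℝ)
    (hdiv : (Matrix.of fun i (p : Fin T × Fin k) => Ustar p.1 i p.2).rank = k * T)
    (Asr : Matrix (Fin d) (Fin d) ℝ)
    (hmin : ∀ A : Matrix (Fin d) (Fin d) ℝ,
      (1 / 2) * ∑ t, frobSq (Astar + Ustar t * (Ustar t)ᵀ - Asr) ≤
        (1 / 2) * ∑ t, frobSq (Astar + Ustar t * (Ustar t)ᵀ - A)) :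
    (Asr - Astar).rank = k * T := by
  have : NeZero T := ⟨hT.ne'⟩
  exact (standard_retraining_rank_error_general hmin).trans hdiv
end
end

section
/- Let d, k, T be positive integers with k(T+1) ≤ d, A* ∈ ℝ^{d×d}, and U_t* ∈ ℝ^{d×k} for t = 1,…,T+1 such that the d×(k(T+1)) matrix [U_1* ⋯ U_{T+1}*] has rank k(T+1). Set Â_SR = A* + (1/T)·Σ_{t=1}^T U_t*(U_t*)ᵀ. Then for every integer k' with 1 ≤ k' ≤ kT and every pair of matrices U, V ∈ ℝ^{d×k'}, the test loss 𝓛_Test(U, V; Â_SR) = (1/2)·‖A* + U_{T+1}*(U_{T+1}*)ᵀ − Â_SR − U Vᵀ‖_F² is strictly positive. -/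
open Matrix BigOperators

noncomputable section

/-!
The residual `A* + U_{T+1}* U_{T+1}*ᵀ - Â_SR` is a combination `∑ t, w t • U_t* U_t*ᵀ` with nonzero
weights `1` and `-1/T`. It factors as `W D Wᵀ`, where `W = [U_1* ⋯ U_{T+1}*]` has independent
columns and `D` is an invertible diagonal matrix, so it has rank `k (T + 1)`, whereas `U Vᵀ` has
rank at most `k' < k (T + 1)`.
-/

theorem frobSq_pos {m n : Type*} [Fintype m] [Fintype n] {M : Matrix m n ℝ} (hM : M ≠ 0) :
    0 < frobSq M := by
  obtain ⟨i, j, hij⟩ : ∃ i j, M i j ≠ 0 := by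
    by_contra! h
    exact hM (Matrix.ext h)
  calc 0 < M i j ^ 2 := by positivity
    _ ≤ ∑ j, M i j ^ 2 :=
      Finset.single_le_sum (fun j _ => sq_nonneg (M i j)) (Finset.mem_univ j)
    _ ≤ frobSq M :=
      Finset.single_le_sum (f := fun i => ∑ j, M i j ^ 2)
        (fun i _ => Finset.sum_nonneg fun j _ => sq_nonneg (M i j)) (Finset.mem_univ i)

section Rank

variable {R K m n p q : Type*}

theorem linearIndependent_col_of_rank_eq_card [CommRing R] [Nontrivial R] [Fintype n]
    {A : Matrix m n R} (hA : A.rank = Fintype.card n) : LinearIndependent R A.col := by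
  rw [linearIndependent_iff_card_eq_finrank_span, ← hA, rank_eq_finrank_span_cols, Set.finrank]

theorem rank_mul_of_linearIndependent_col [CommSemiring R] [Fintype n] [Fintype p]
    {A : Matrix m n R} (hA : LinearIndependent R A.col) (B : Matrix n p R) :
    (A * B).rank = B.rank := by
  rw [rank, mulVecLin_mul, LinearMap.range_comp]
  exact (Submodule.equivMapOfInjective _ (mulVec_injective_iff.mpr hA) _).finrank_eq.symm

theorem rank_mul_mul_transpose_of_linearIndependent_col [Field K] [Fintype n] [Fintype p]
    [Fintype q] {A : Matrix m n K} {B : Matrix q p K} (hA : LinearIndependent K A.col)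
    (hB : LinearIndependent K B.col) (M : Matrix n p K) : (A * M * Bᵀ).rank = M.rank :=
  calc (A * M * Bᵀ).rank = (M * Bᵀ).rank := by
        rw [Matrix.mul_assoc, rank_mul_of_linearIndependent_col hA]
    _ = (B * Mᵀ).rank := by rw [← rank_transpose, transpose_mul, transpose_transpose]
    _ = M.rank := by rw [rank_mul_of_linearIndependent_col hB, rank_transpose]

theorem sub_mul_ne_zero_of_card_lt_rank [CommRing R] [Nontrivial R] [Fintype n] [Fintype p]
    {M : Matrix m n R} (hM : Fintype.card p < M.rank) (U : Matrix m p R) (V : Matrix p n R) :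
    M - U * V ≠ 0 := by
  intro h
  rw [sub_eq_zero.mp h] at hM
  exact hM.not_ge ((rank_mul_le_left U V).trans (rank_le_card_width U))

end Rank

section ConcatCols

variable {ι κ m n R : Type*}

/-- The block row `[U_1 ⋯ U_N]` of a family of matrices of the same size; the column `(t, j)` is
the `j`-th column of `U t`. -/
def concatCols (U : ι → Matrix m κ R) : Matrix m (ι × κ) R :=
  of fun i p => U p.1 i p.2

theorem sum_smul_mul_transpose_eq_concatCols [Fintype ι] [Fintype κ] [DecidableEq ι]
    [DecidableEq κ] [CommSemiring R] (c : ι → R) (U : ι → Matrix m κ R) (V : ι → Matrix n κ R) :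
    ∑ t, c t • (U t * (V t)ᵀ) =
      concatCols U * diagonal (fun p : ι × κ => c p.1) * (concatCols V)ᵀ := by
  ext i j
  simp only [concatCols, Matrix.sum_apply, Matrix.smul_apply, smul_eq_mul, mul_apply (N := _ᵀ),
    mul_diagonal, transpose_apply, of_apply, Fintype.sum_prod_type, Finset.mul_sum]
  exact Finset.sum_congr rfl fun t _ => Finset.sum_congr rfl fun l _ => by ring

theorem rank_sum_smul_mul_transpose [Fintype ι] [Fintype κ] [Fintype n] [Field R]
    {c : ι → R} (hc : ∀ t, c t ≠ 0) {U : ι → Matrix m κ R} {V : ι → Matrix n κ R}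
    (hU : LinearIndependent R (concatCols U).col) (hV : LinearIndependent R (concatCols V).col) :
    (∑ t, c t • (U t * (V t)ᵀ)).rank = Fintype.card (ι × κ) := by
  classical
  rw [sum_smul_mul_transpose_eq_concatCols,
    rank_mul_mul_transpose_of_linearIndependent_col hU hV, rank_diagonal]
  exact Fintype.card_congr (Equiv.subtypeUnivEquiv fun p => hc p.1)

end ConcatCols

/-- The coefficients of the task terms `U_t* U_t*ᵀ` in the residual that standard retraining on the
first `T` tasks leaves on the last one: `-1/T` for each retraining task, `1` for the held-out task
`Fin.last T`. -/
def residualWeight (T : ℕ) : Fin (T + 1) → ℝ :=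
  Fin.snoc (α := fun _ => ℝ) (fun _ => -(T : ℝ)⁻¹) 1

theorem residualWeight_ne_zero {T : ℕ} (hT : 0 < T) (t : Fin (T + 1)) : residualWeight T t ≠ 0 := by
  induction t using Fin.lastCases with
  | last => simp [residualWeight]
  | cast t => simp [residualWeight, hT.ne']

theorem add_last_sub_average_eq_sum_residualWeight_smul {M : Type*} [AddCommGroup M] [Module ℝ M]
    {T : ℕ} (a : M) (G : Fin (T + 1) → M) :
    a + G (Fin.last T) - (a + (T : ℝ)⁻¹ • ∑ t : Fin T, G t.castSucc) =
      ∑ t, residualWeight T t • G t := by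
  simp only [residualWeight, Fin.sum_univ_castSucc, Fin.snoc_castSucc, Fin.snoc_last, neg_smul,
    one_smul, Finset.sum_neg_distrib, ← Finset.smul_sum]
  abel

theorem standard_retraining_positive_test_loss_general {m κ r : Type*} [Fintype m] [Fintype κ]
    [Fintype r] {T : ℕ} (hT : 0 < T) (Astar : Matrix m m ℝ) (Ustar : Fin (T + 1) → Matrix m κ ℝ)
    (hdiv : (concatCols Ustar).rank = Fintype.card κ * (T + 1)) (Asr : Matrix m m ℝ)
    (hAsr : Asr = Astar + (T : ℝ)⁻¹ • ∑ t : Fin T, Ustar t.castSucc * (Ustar t.castSucc)ᵀ)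
    (hr : Fintype.card r < Fintype.card κ * (T + 1)) (U V : Matrix m r ℝ) :
    0 < (1 / 2) * frobSq
      (Astar + Ustar (Fin.last T) * (Ustar (Fin.last T))ᵀ - Asr - U * Vᵀ) := by
  have hcard : Fintype.card (Fin (T + 1) × κ) = Fintype.card κ * (T + 1) := by
    rw [Fintype.card_prod, Fintype.card_fin, mul_comm]
  have hcols : LinearIndependent ℝ (concatCols Ustar).col :=
    linearIndependent_col_of_rank_eq_card (hdiv.trans hcard.symm)
  have hresidual : Astar + Ustar (Fin.last T) * (Ustar (Fin.last T))ᵀ - Asr =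
      ∑ t, residualWeight T t • (Ustar t * (Ustar t)ᵀ) := by
    rw [hAsr]
    exact add_last_sub_average_eq_sum_residualWeight_smul Astar fun t => Ustar t * (Ustar t)ᵀ
  have hrank : (∑ t, residualWeight T t • (Ustar t * (Ustar t)ᵀ)).rank =
      Fintype.card κ * (T + 1) :=
    (rank_sum_smul_mul_transpose (residualWeight_ne_zero hT) hcols hcols).trans hcard
  rw [hresidual]
  exact mul_pos one_half_pos
    (frobSq_pos (sub_mul_ne_zero_of_card_lt_rank (hrank ▸ hr) U Vᵀ))

/-- Corollary 1: after standard retraining, every adapter of rank `k' ≤ kT` incurs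
strictly positive test loss on the held-out task. -/
theorem standard_retraining_positive_test_loss
    (d k T : ℕ) (hd : 0 < d) (hk : 0 < k) (hT : 0 < T) (hkT : k * (T + 1) ≤ d)
    (Astar : Matrix (Fin d) (Fin d) ℝ)
    (Ustar : Fin (T + 1) → Matrix (Fin d) (Fin k) ℝ)
    (hdiv : (Matrix.of fun i (p : Fin (T + 1) × Fin k) => Ustar p.1 i p.2).rank
        = k * (T + 1))
    (Asr : Matrix (Fin d) (Fin d) ℝ)
    (hAsr : Asr = Astar + (T : ℝ)⁻¹ • ∑ t : Fin T, Ustar t.castSucc * (Ustar t.castSucc)ᵀ) :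
    ∀ k' : ℕ, 1 ≤ k' → k' ≤ k * T →
      ∀ U V : Matrix (Fin d) (Fin k') ℝ,
        0 < (1 / 2) * frobSq
          (Astar + Ustar (Fin.last T) * (Ustar (Fin.last T))ᵀ - Asr - U * Vᵀ) := by
  intro k' _ hk' U V
  have hlt : k' < k * (T + 1) := hk'.trans_lt (Nat.mul_lt_mul_of_pos_left T.lt_succ_self hk)
  exact standard_retraining_positive_test_loss_general hT Astar Ustar
    (by simpa [concatCols] using hdiv) Asr hAsr (by simpa using hlt) U V
end
end

section
/- Let d, k, T be positive integers (T ≥ 1), A* ∈ ℝ^{d×d}, and U_t* ∈ ℝ^{d×k} for t = 1,…,T+1. Suppose Â ∈ ℝ^{d×d} and Û_1,…,Û_T ∈ ℝ^{d×k} satisfy 𝓛(Â, Û_1,…,Û_T) = 0, where 𝓛 is the Meta-LoRA loss over tasks 1,…,T. Then there exist matrices U, V ∈ ℝ^{d×3k} such that 𝓛_Test(U, V; Â) = (1/2)·‖A* + U_{T+1}*(U_{T+1}*)ᵀ − Â − U Vᵀ‖_F² = 0. -/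
open Matrix BigOperators

noncomputable section

/-!
A single training task that is fitted exactly pins down the error of the shared parameter:
`A* - Â = Û Ûᵀ - U* U*ᵀ`. For a held-out factor `W` the matrix to be matched by the adapter is then
`W Wᵀ + Û Ûᵀ - U* U*ᵀ`, a combination of three products with inner dimension `k`; juxtaposing their
factors writes it as one product with inner dimension `3k`, the minus sign going into `V` only.
-/

theorem frobSq_nonneg {m n : Type*} [Fintype m] [Fintype n] (M : Matrix m n ℝ) : 0 ≤ frobSq M :=
  Finset.sum_nonneg fun _ _ => Finset.sum_nonneg fun _ _ => sq_nonneg _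

theorem frobSq_eq_zero_iff {m n : Type*} [Fintype m] [Fintype n] {M : Matrix m n ℝ} :
    frobSq M = 0 ↔ M = 0 := by
  have row_nonneg (i : m) : 0 ≤ ∑ j, M i j ^ 2 := Finset.sum_nonneg fun _ _ => sq_nonneg _
  simp only [frobSq, Finset.sum_eq_zero_iff_of_nonneg fun i _ => row_nonneg i,
    Finset.sum_eq_zero_iff_of_nonneg fun _ _ => sq_nonneg _, Finset.mem_univ, true_imp_iff,
    sq_eq_zero_iff, ← Matrix.ext_iff, Matrix.zero_apply]

theorem sum_frobSq_eq_zero_iff {τ m n : Type*} [Fintype τ] [Fintype m] [Fintype n]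
    {M : τ → Matrix m n ℝ} : ∑ t, frobSq (M t) = 0 ↔ ∀ t, frobSq (M t) = 0 := by
  simp only [Finset.sum_eq_zero_iff_of_nonneg fun _ _ => frobSq_nonneg _, Finset.mem_univ,
    true_imp_iff]

theorem add_mul_sub_eq_fromCols_mul_fromRows {R m n a b c : Type*} [Ring R]
    [Fintype a] [Fintype b] [Fintype c] {A B : Matrix m n R}
    {P : Matrix m a R} {P' : Matrix a n R} {Q : Matrix m b R} {Q' : Matrix b n R}
    (h : A + P * P' = B + Q * Q') (W : Matrix m c R) (W' : Matrix c n R) :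
    A + W * W' - B = fromCols W (fromCols Q P) * fromRows W' (fromRows Q' (-P')) := by
  have hAB : A - B = Q * Q' - P * P' := by
    rw [sub_eq_sub_iff_add_eq_add, h, add_comm]
  calc A + W * W' - B = W * W' + (A - B) := by abel
    _ = W * W' + (Q * Q' + P * -P') := by rw [hAB, Matrix.mul_neg, sub_eq_add_neg]
    _ = fromCols W (fromCols Q P) * fromRows W' (fromRows Q' (-P')) := by
      simp only [fromCols_mul_fromRows]

theorem exists_mul_transpose_eq_mul_of_equiv {R m n s r : Type*} [Mul R] [AddCommMonoid R]
    [Fintype s] [Fintype r] (e : r ≃ s) (U : Matrix m s R) (V : Matrix s n R) :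
    ∃ (U' : Matrix m r R) (V' : Matrix n r R), U' * V'ᵀ = U * V :=
  ⟨U.submatrix id e, (V.submatrix e id)ᵀ, by
    rw [transpose_transpose, submatrix_mul_equiv, submatrix_id_id]⟩

theorem metaLoRA_rank3k_adapter_zero_test_loss_general {m a b c r : Type*} [Fintype m]
    [Fintype a] [Fintype b] [Fintype c] [Fintype r]
    (hr : Fintype.card r = Fintype.card a + Fintype.card b + Fintype.card c)
    {Astar Ahat : Matrix m m ℝ} {Ustar : Matrix m a ℝ} {Uhat : Matrix m b ℝ}
    (hfit : frobSq (Astar + Ustar * Ustarᵀ - Ahat - Uhat * Uhatᵀ) = 0) (W : Matrix m c ℝ) :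
    ∃ U V : Matrix m r ℝ, frobSq (Astar + W * Wᵀ - Ahat - U * Vᵀ) = 0 := by
  have hfit_eq : Astar + Ustar * Ustarᵀ = Ahat + Uhat * Uhatᵀ := by
    rwa [frobSq_eq_zero_iff, sub_sub, sub_eq_zero] at hfit
  have e : r ≃ c ⊕ b ⊕ a := Fintype.equivOfCardEq (by simp only [Fintype.card_sum]; omega)
  obtain ⟨U, V, hUV⟩ := exists_mul_transpose_eq_mul_of_equiv e
    (fromCols W (fromCols Uhat Ustar)) (fromRows Wᵀ (fromRows Uhatᵀ (-Ustarᵀ)))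
  refine ⟨U, V, ?_⟩
  rw [frobSq_eq_zero_iff, sub_eq_zero, hUV]
  exact add_mul_sub_eq_fromCols_mul_fromRows hfit_eq W Wᵀ

/-- Corollary 2: if the Meta-LoRA loss over tasks `1,…,T` vanishes at `(Â, Û)`, then
there is a rank-`3k` adapter achieving zero test loss on the held-out task `T+1`. -/
theorem metaLoRA_rank3k_adapter_zero_test_loss
    (d k T : ℕ) (hd : 0 < d) (hk : 0 < k) (hT : 0 < T)
    (Astar : Matrix (Fin d) (Fin d) ℝ)
    (Ustar : Fin (T + 1) → Matrix (Fin d) (Fin k) ℝ)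
    (Ahat : Matrix (Fin d) (Fin d) ℝ)
    (Uhat : Fin T → Matrix (Fin d) (Fin k) ℝ)
    (hloss : (1 / 2) * ∑ t : Fin T, frobSq
        (Astar + Ustar t.castSucc * (Ustar t.castSucc)ᵀ - Ahat - Uhat t * (Uhat t)ᵀ) = 0) :
    ∃ U V : Matrix (Fin d) (Fin (3 * k)) ℝ,
      (1 / 2) * frobSq
        (Astar + Ustar (Fin.last T) * (Ustar (Fin.last T))ᵀ - Ahat - U * Vᵀ) = 0 := by
  have hfit := sum_frobSq_eq_zero_iff.mp
    ((mul_eq_zero.mp hloss).resolve_left one_half_pos.ne') ⟨0, hT⟩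
  simpa only [mul_eq_zero, one_half_pos.ne', false_or] using
    metaLoRA_rank3k_adapter_zero_test_loss_general (r := Fin (3 * k))
      (by simp only [Fintype.card_fin]; omega) hfit (Ustar (Fin.last T))
end
end

section
/- Let d, k, T be positive integers with T ≥ 3 and kT ≤ d, A* ∈ ℝ^{d×d}, and U_t* ∈ ℝ^{d×k} for t = 1,…,T+1, where U_1*,…,U_T* satisfy the task-diversity assumption. Suppose Â ∈ ℝ^{d×d} and Û_1,…,Û_T ∈ ℝ^{d×k} satisfy 𝓛(Â, Û_1,…,Û_T) = 0, where 𝓛 is the Meta-LoRA loss over tasks 1,…,T. Then there exist matrices U, V ∈ ℝ^{d×k} such that 𝓛_Test(U, V; Â) = (1/2)·‖A* + U_{T+1}*(U_{T+1}*)ᵀ − Â − U Vᵀ‖_F² = 0. -/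
open Matrix BigOperators

noncomputable section

section LowRankPerturbation

variable {K V W : Type*} [DivisionRing K] [AddCommGroup V] [Module K V] [AddCommGroup W]
  [Module K W]

theorem ker_add_inf_ker_add_le_of_disjoint_range {C S S' : V →ₗ[K] W}
    (hrange : Disjoint S.range S'.range) :
    (C + S).ker ⊓ (C + S').ker ≤ S.ker ⊓ S'.ker := by
  rintro x ⟨hx, hx'⟩
  simp only [SetLike.mem_coe, LinearMap.mem_ker, LinearMap.add_apply] at hx hx'
  have hSS' : S x = S' x := add_left_cancel (hx.trans hx'.symm)
  have hS : S x = 0 :=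
    Submodule.disjoint_def.1 hrange _ (S.mem_range_self x) ⟨x, hSS'.symm⟩
  exact ⟨hS, hSS'.symm.trans hS⟩

theorem finrank_ker_le_of_finrank_range_le [FiniteDimensional K V] {f g : V →ₗ[K] W}
    (h : Module.finrank K f.range ≤ Module.finrank K g.range) :
    Module.finrank K g.ker ≤ Module.finrank K f.ker := by
  have hf := f.finrank_range_add_finrank_ker
  have hg := g.finrank_range_add_finrank_ker
  omega

theorem finrank_inf_le_finrank_inf_of_codisjoint [FiniteDimensional K V]
    {p p' q q' : Submodule K V} (hp : Module.finrank K p ≤ Module.finrank K q)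
    (hp' : Module.finrank K p' ≤ Module.finrank K q') (hcodisj : Codisjoint p p') :
    Module.finrank K ↑(p ⊓ p') ≤ Module.finrank K ↑(q ⊓ q') := by
  have hpp' := Submodule.finrank_sup_add_finrank_inf_eq p p'
  have hqq' := Submodule.finrank_sup_add_finrank_inf_eq q q'
  have hle := (q ⊔ q').finrank_le
  rw [hcodisj.eq_top, finrank_top] at hpp'
  omega

theorem ker_inf_ker_le_ker_of_finrank_range_add_le [FiniteDimensional K V] {C S S' : V →ₗ[K] W}
    (hrange : Disjoint S.range S'.range) (hker : Codisjoint S.ker S'.ker)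
    (hS : Module.finrank K (C + S).range ≤ Module.finrank K S.range)
    (hS' : Module.finrank K (C + S').range ≤ Module.finrank K S'.range) :
    S.ker ⊓ S'.ker ≤ C.ker := by
  have hker_eq : (C + S).ker ⊓ (C + S').ker = S.ker ⊓ S'.ker :=
    Submodule.eq_of_le_of_finrank_le (ker_add_inf_ker_add_le_of_disjoint_range hrange)
      (finrank_inf_le_finrank_inf_of_codisjoint (finrank_ker_le_of_finrank_range_le hS)
        (finrank_ker_le_of_finrank_range_le hS') hker)
  intro x hx
  have hSx : S x = 0 := hx.1
  have hCSx : C x + S x = 0 := (hker_eq.ge hx).1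
  simpa only [hSx, add_zero, ← LinearMap.mem_ker] using hCSx

theorem sup_pairwise_inf_eq_top {α : Type*} [Lattice α] [BoundedOrder α] [IsModularLattice α]
    {a b c : α} (ha : Codisjoint a (b ⊓ c)) (hb : Codisjoint b (a ⊓ c)) :
    a ⊓ b ⊔ a ⊓ c ⊔ b ⊓ c = ⊤ := by
  have ha_eq : a ⊓ b ⊔ a ⊓ c = a := by
    rw [inf_sup_assoc_of_le b inf_le_left, hb.eq_top, inf_top_eq]
  rw [ha_eq, ha.eq_top]

theorem eq_zero_of_finrank_range_add_le [FiniteDimensional K V] {ι : Type*} [Fintype ι]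
    (hι : 3 ≤ Fintype.card ι) {C : V →ₗ[K] W} {S : ι → V →ₗ[K] W}
    (hrange : Pairwise fun s t => Disjoint (S s).range (S t).range)
    (hker : ∀ t, Codisjoint (S t).ker (⨅ s ≠ t, (S s).ker))
    (hrank : ∀ t, Module.finrank K (C + S t).range ≤ Module.finrank K (S t).range) :
    C = 0 := by
  obtain ⟨a, b, c, hab, hac, hbc⟩ := Fintype.two_lt_card_iff.1 hι
  have hker_pair {s t : ι} (hst : s ≠ t) : (S s).ker ⊓ (S t).ker ≤ C.ker :=
    ker_inf_ker_le_ker_of_finrank_range_add_le (hrange hst)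
      ((hker s).mono_right (iInf₂_le t hst.symm)) (hrank s) (hrank t)
  have hker_triple {r s t : ι} (hs : s ≠ r) (ht : t ≠ r) :
      Codisjoint (S r).ker ((S s).ker ⊓ (S t).ker) :=
    (hker r).mono_right (le_inf (iInf₂_le s hs) (iInf₂_le t ht))
  rw [← LinearMap.ker_eq_top, eq_top_iff,
    ← sup_pairwise_inf_eq_top (hker_triple hab.symm hac.symm) (hker_triple hab hbc.symm)]
  exact sup_le (sup_le (hker_pair hab) (hker_pair hac)) (hker_pair hbc)

end LowRankPerturbation

section TaskDiversity

variable {K m n κ τ : Type*} [Field K]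

/-- The task-diversity assumption on factors `U t` indexed by tasks: the columns of all of them
together are linearly independent, i.e. the horizontal concatenation of the `U t` has full column
rank (see `taskDiverse_iff_rank_eq`). -/
def TaskDiverse (U : τ → Matrix m κ K) : Prop :=
  LinearIndependent K fun p : τ × κ => (U p.1).col p.2

theorem taskDiverse_iff_rank_eq [Fintype κ] [Fintype τ] {U : τ → Matrix m κ K} :
    TaskDiverse U ↔
      (Matrix.of fun i (p : τ × κ) => U p.1 i p.2).rank = Fintype.card κ * Fintype.card τ := by
  rw [TaskDiverse, linearIndependent_iff_card_eq_finrank_span, Matrix.rank_eq_finrank_span_cols,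
    Fintype.card_prod, mul_comm, eq_comm]
  rfl

namespace TaskDiverse

theorem mulVec_injective [Fintype κ] {U : τ → Matrix m κ K} (hU : TaskDiverse U) (t : τ) :
    Function.Injective (U t).mulVec :=
  Matrix.mulVec_injective_iff.2 (LinearIndependent.comp hU (Prod.mk t) (Prod.mk_right_injective t))

theorem pairwise_disjoint_range [Fintype κ] {U : τ → Matrix m κ K} (hU : TaskDiverse U) :
    Pairwise fun s t => Disjoint (U s).mulVecLin.range (U t).mulVecLin.range := by
  intro s t hst
  have hrange (r : τ) : (U r).mulVecLin.range =
      Submodule.span K ((fun p : τ × κ => (U p.1).col p.2) '' Set.range (Prod.mk r)) := by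
    rw [Matrix.range_mulVecLin, ← Set.range_comp]
    rfl
  rw [hrange, hrange]
  refine LinearIndependent.disjoint_span_image hU (Set.disjoint_left.2 ?_)
  rintro _ ⟨i, rfl⟩ ⟨j, hj⟩
  exact hst (congrArg Prod.fst hj).symm

variable [Fintype n] {V : τ → Matrix n κ K}

theorem exists_transpose_mulVec_eq (hV : TaskDiverse V) (y : τ → κ → K) :
    ∃ x : n → K, ∀ t, (V t)ᵀ *ᵥ x = y t := by
  have : Finite (τ × κ) := LinearIndependent.finite hV
  have := Fintype.ofFinite (τ × κ)
  let G : Matrix (τ × κ) n K := Matrix.of fun p => (V p.1).col p.2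
  have hG : G.mulVecLin.range = ⊤ := by
    refine Submodule.eq_top_of_finrank_eq ?_
    rw [Module.finrank_fintype_fun_eq_card]
    exact LinearIndependent.rank_matrix hV
  obtain ⟨x, hx⟩ := LinearMap.range_eq_top.1 hG fun p => y p.1 p.2
  exact ⟨x, fun t => funext fun j => congrFun hx (t, j)⟩

theorem transpose_mulVec_surjective (hV : TaskDiverse V) (t : τ) :
    Function.Surjective (V t)ᵀ.mulVec := fun y =>
  (hV.exists_transpose_mulVec_eq fun _ => y).imp fun _ hx => hx t

theorem codisjoint_ker_transpose (hV : TaskDiverse V) (t : τ) :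
    Codisjoint (V t)ᵀ.mulVecLin.ker (⨅ s ≠ t, (V s)ᵀ.mulVecLin.ker) := by
  classical
  rw [Submodule.codisjoint_iff_exists_add_eq]
  intro x
  obtain ⟨z, hz⟩ := hV.exists_transpose_mulVec_eq (Pi.single t ((V t)ᵀ *ᵥ x))
  refine ⟨x - z, z, ?_, ?_, sub_add_cancel x z⟩
  · rw [LinearMap.mem_ker, Matrix.mulVecLin_apply, Matrix.mulVec_sub, hz, Pi.single_eq_same,
      sub_self]
  · simp only [Submodule.mem_iInf, LinearMap.mem_ker, Matrix.mulVecLin_apply, hz]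
    exact fun s hst => Pi.single_eq_of_ne hst _

theorem eq_zero_of_rank_add_mul_transpose_le [Fintype κ] [Fintype τ] {U : τ → Matrix m κ K}
    (hU : TaskDiverse U) (hV : TaskDiverse V) (hτ : 3 ≤ Fintype.card τ) {C : Matrix m n K}
    (hrank : ∀ t, (C + U t * (V t)ᵀ).rank ≤ Fintype.card κ) : C = 0 := by
  have hrange (t : τ) : (U t * (V t)ᵀ).mulVecLin.range = (U t).mulVecLin.range := by
    rw [Matrix.mulVecLin_mul, LinearMap.range_comp_of_range_eq_top]
    exact LinearMap.range_eq_top.2 (hV.transpose_mulVec_surjective t)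
  have hker (t : τ) : (U t * (V t)ᵀ).mulVecLin.ker = (V t)ᵀ.mulVecLin.ker := by
    rw [Matrix.mulVecLin_mul, LinearMap.ker_comp_of_ker_eq_bot]
    exact LinearMap.ker_eq_bot.2 (hU.mulVec_injective t)
  have hfinrank (t : τ) : Module.finrank K (U t).mulVecLin.range = Fintype.card κ := by
    rw [LinearMap.finrank_range_of_inj (hU.mulVec_injective t), Module.finrank_fintype_fun_eq_card]
  have hC : C.mulVecLin = 0 := by
    refine eq_zero_of_finrank_range_add_le (S := fun t => (U t * (V t)ᵀ).mulVecLin) hτ ?_ ?_ ?_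
    · simpa only [hrange] using hU.pairwise_disjoint_range
    · simpa only [hker] using hV.codisjoint_ker_transpose
    · intro t
      rw [hrange, hfinrank, ← Matrix.mulVecLin_add]
      exact hrank t
  exact Matrix.mulVec_injective (funext fun x => by simpa using LinearMap.congr_fun hC x)

end TaskDiverse

end TaskDiversity

section MetaLoRA

variable {m n κ τ : Type*} [Fintype m] [Fintype n] [Fintype κ] [Fintype τ]

theorem eq_of_metaLoRA_loss_eq_zero (hτ : 3 ≤ Fintype.card τ) {Astar Ahat : Matrix m n ℝ}
    {Ustar Uhat : τ → Matrix m κ ℝ} {Vstar Vhat : τ → Matrix n κ ℝ}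
    (hU : TaskDiverse Ustar) (hV : TaskDiverse Vstar)
    (hloss : (1 / 2) * ∑ t, frobSq
      (Astar + Ustar t * (Vstar t)ᵀ - Ahat - Uhat t * (Vhat t)ᵀ) = 0) :
    Ahat = Astar := by
  have hfit (t : τ) : Astar + Ustar t * (Vstar t)ᵀ - Ahat - Uhat t * (Vhat t)ᵀ = 0 := by
    have hsum := (mul_eq_zero_iff_left (by norm_num)).1 hloss
    rw [Finset.sum_eq_zero_iff_of_nonneg fun t _ => frobSq_nonneg _] at hsum
    exact frobSq_eq_zero_iff.1 (hsum t (Finset.mem_univ t))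
  have hrank (t : τ) : (Astar - Ahat + Ustar t * (Vstar t)ᵀ).rank ≤ Fintype.card κ := by
    rw [sub_add_eq_add_sub, sub_eq_zero.1 (hfit t)]
    exact (Matrix.rank_mul_le_left _ _).trans (Matrix.rank_le_card_width _)
  exact (sub_eq_zero.1 (hU.eq_zero_of_rank_add_mul_transpose_le hV hτ hrank)).symm

theorem metaLoRA_rankk_adapter_zero_test_loss_general (hτ : 3 ≤ Fintype.card τ)
    {Astar Ahat : Matrix m n ℝ} {Ustar Uhat : τ → Matrix m κ ℝ} {Vstar Vhat : τ → Matrix n κ ℝ}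
    (hU : TaskDiverse Ustar) (hV : TaskDiverse Vstar)
    (hloss : (1 / 2) * ∑ t, frobSq
      (Astar + Ustar t * (Vstar t)ᵀ - Ahat - Uhat t * (Vhat t)ᵀ) = 0)
    (Unew : Matrix m κ ℝ) (Vnew : Matrix n κ ℝ) :
    ∃ (U : Matrix m κ ℝ) (V : Matrix n κ ℝ),
      (1 / 2) * frobSq (Astar + Unew * Vnewᵀ - Ahat - U * Vᵀ) = 0 := by
  refine ⟨Unew, Vnew, ?_⟩
  rw [eq_of_metaLoRA_loss_eq_zero hτ hU hV hloss, add_sub_cancel_left, sub_self,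
    frobSq_eq_zero_iff.2 rfl, mul_zero]

end MetaLoRA

/-- Corollary 3: with `T ≥ 3` diverse retraining tasks, any zero of the Meta-LoRA loss
admits a rank-`k` adapter achieving zero test loss on the held-out task `T+1`. -/
theorem metaLoRA_rankk_adapter_zero_test_loss
    (d k T : ℕ) (hd : 0 < d) (hk : 0 < k) (hT : 3 ≤ T) (hkT : k * T ≤ d)
    (Astar : Matrix (Fin d) (Fin d) ℝ)
    (Ustar : Fin (T + 1) → Matrix (Fin d) (Fin k) ℝ)
    (hdiv : (Matrix.of fun i (p : Fin T × Fin k) => Ustar p.1.castSucc i p.2).rank = k * T)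
    (Ahat : Matrix (Fin d) (Fin d) ℝ)
    (Uhat : Fin T → Matrix (Fin d) (Fin k) ℝ)
    (hloss : (1 / 2) * ∑ t : Fin T, frobSq
        (Astar + Ustar t.castSucc * (Ustar t.castSucc)ᵀ - Ahat - Uhat t * (Uhat t)ᵀ) = 0) :
    ∃ U V : Matrix (Fin d) (Fin k) ℝ,
      (1 / 2) * frobSq
        (Astar + Ustar (Fin.last T) * (Ustar (Fin.last T))ᵀ - Ahat - U * Vᵀ) = 0 := by
  have hdiverse : TaskDiverse fun t : Fin T => Ustar t.castSucc :=
    taskDiverse_iff_rank_eq.2 (by simpa using hdiv)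
  exact metaLoRA_rankk_adapter_zero_test_loss_general (by simpa using hT)
    hdiverse hdiverse hloss _ _
end
end

section
/- Let d, k be positive integers and U₁*, U₂*, Û₁, Û₂ ∈ ℝ^{d×k}. Define B₁ = (1/2)·(Û₁(Û₁)ᵀ − U₁*(U₁*)ᵀ − Û₂(Û₂)ᵀ + U₂*(U₂*)ᵀ) and assume B₁ Û₁ = 0 and B₁ Û₂ = 0. Then every eigenvector of the symmetric matrix Û₂(Û₂)ᵀ − Û₁(Û₁)ᵀ with nonzero eigenvalue λ is also an eigenvector of U₂*(U₂*)ᵀ − U₁*(U₁*)ᵀ with the same eigenvalue λ: i.e., if (Û₂(Û₂)ᵀ − Û₁(Û₁)ᵀ) z = λ z with λ ≠ 0, then (U₂*(U₂*)ᵀ − U₁*(U₁*)ᵀ) z = λ z. -/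
open Matrix

noncomputable section

/-!
The matrix `B₁` annihilates the columns of `Û₁` and `Û₂`, hence the range of
`Û₂Û₂ᵀ − Û₁Û₁ᵀ`. An eigenvector of the latter with nonzero eigenvalue lies in that range, so
`B₁` kills it; and `2B₁` is exactly the difference between `U₂*(U₂*)ᵀ − U₁*(U₁*)ᵀ` and
`Û₂Û₂ᵀ − Û₁Û₁ᵀ`.
-/

section

variable {l m₁ m₂ n p r₁ r₂ R : Type*} [Fintype n]

theorem mulVec_eq_zero_of_mul_eq_zero_of_mulVec_eq_smul [CommSemiring R] [NoZeroDivisors R]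
    {C : Matrix l n R} {A : Matrix n n R} {z : n → R} {μ : R}
    (hCA : C * A = 0) (hμ : μ ≠ 0) (hz : A *ᵥ z = μ • z) : C *ᵥ z = 0 := by
  have hsmul : μ • C *ᵥ z = 0 := by
    rw [← mulVec_smul, ← hz, mulVec_mulVec, hCA, zero_mulVec]
  exact funext fun i ↦ (mul_eq_zero.mp (congrFun hsmul i)).resolve_left hμ

theorem mul_mul_sub_mul_eq_zero [Fintype m₁] [Fintype m₂] [NonUnitalRing R]
    {C : Matrix l n R} {P : Matrix n m₁ R} {Q : Matrix n m₂ R}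
    (hP : C * P = 0) (hQ : C * Q = 0) (P' : Matrix m₁ p R) (Q' : Matrix m₂ p R) :
    C * (P * P' - Q * Q') = 0 := by
  rw [Matrix.mul_sub, ← Matrix.mul_assoc, ← Matrix.mul_assoc, hP, hQ, Matrix.zero_mul,
    Matrix.zero_mul, sub_zero]

/-- Here `C` is twice the paper's `B₁`, which avoids dividing by `2` in `R`. -/
theorem stationarity_shared_eigenvectors_general [Fintype m₁] [Fintype m₂] [Fintype r₁]
    [Fintype r₂] [CommRing R] [NoZeroDivisors R]
    {U₁s : Matrix n r₁ R} {U₂s : Matrix n r₂ R} {Uh₁ : Matrix n m₁ R} {Uh₂ : Matrix n m₂ R}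
    {C : Matrix n n R} (hC : C = Uh₁ * Uh₁ᵀ - U₁s * U₁sᵀ - Uh₂ * Uh₂ᵀ + U₂s * U₂sᵀ)
    (h₁ : C * Uh₁ = 0) (h₂ : C * Uh₂ = 0) {z : n → R} {μ : R} (hμ : μ ≠ 0)
    (hz : (Uh₂ * Uh₂ᵀ - Uh₁ * Uh₁ᵀ) *ᵥ z = μ • z) :
    (U₂s * U₂sᵀ - U₁s * U₁sᵀ) *ᵥ z = μ • z := by
  have hker : C *ᵥ z = 0 :=
    mulVec_eq_zero_of_mul_eq_zero_of_mulVec_eq_smul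
      (mul_mul_sub_mul_eq_zero h₂ h₁ Uh₂ᵀ Uh₁ᵀ) hμ hz
  have hsplit : U₂s * U₂sᵀ - U₁s * U₁sᵀ = C + (Uh₂ * Uh₂ᵀ - Uh₁ * Uh₁ᵀ) := by
    rw [hC]
    abel
  rw [hsplit, add_mulVec, hker, zero_add, hz]

end

/-- Corollary 4 (shared eigenvectors): at a first-order stationary point of the two-task
Meta-LoRA loss, every eigenvector of `Û₂Û₂ᵀ − Û₁Û₁ᵀ` with nonzero eigenvalue `λ` is an
eigenvector of `U₂*(U₂*)ᵀ − U₁*(U₁*)ᵀ` with the same eigenvalue. -/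
theorem stationarity_shared_eigenvectors
    (d k : ℕ) (hd : 0 < d) (hk : 0 < k)
    (U₁s U₂s Uh₁ Uh₂ : Matrix (Fin d) (Fin k) ℝ)
    (B₁ : Matrix (Fin d) (Fin d) ℝ)
    (hB₁ : B₁ = ((1 : ℝ) / 2) • (Uh₁ * Uh₁ᵀ - U₁s * U₁sᵀ - Uh₂ * Uh₂ᵀ + U₂s * U₂sᵀ))
    (h1 : B₁ * Uh₁ = 0) (h2 : B₁ * Uh₂ = 0) :
    ∀ (z : Fin d → ℝ) (lam : ℝ), lam ≠ 0 →
      (Uh₂ * Uh₂ᵀ - Uh₁ * Uh₁ᵀ).mulVec z = lam • z →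
      (U₂s * U₂sᵀ - U₁s * U₁sᵀ).mulVec z = lam • z := by
  rw [hB₁, smul_mul, smul_eq_zero_iff_right (by norm_num)] at h1 h2
  exact fun _ _ ↦ stationarity_shared_eigenvectors_general rfl h1 h2
end
end

section
/- Let d, k be positive integers and U₁*, U₂*, Û₁, Û₂ ∈ ℝ^{d×k}. Define B₁ = (1/2)·(Û₁(Û₁)ᵀ − U₁*(U₁*)ᵀ − Û₂(Û₂)ᵀ + U₂*(U₂*)ᵀ) and assume B₁ Û₁ = 0, B₁ Û₂ = 0, and B₁ ≠ 0. Then the 2k columns of Û₁ and Û₂ are not linearly independent; equivalently, the d×2k concatenated matrix [Û₁ Û₂] has rank at most 2k − 1, i.e., dim(im(Û₁) + im(Û₂)) ≤ 2k − 1. -/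
open Matrix

noncomputable section

/-!
Collect the factors into block matrices `U = [Û₁ Û₂]` and `V = [U₁* U₂*]`, and let `D` be the
signature matrix `diag(I, -I)`. Then `2 B₁ = U D Uᴴ - V D Vᴴ`, and stationarity says `B₁ U = 0`,
that is `U (D Uᴴ U) = V (D Vᴴ U)`. If the columns of `U` were linearly independent, then `D Uᴴ U`
would be invertible and both sides would have rank `2k`, so `D Vᴴ U` would have full row rank and
could be cancelled from `B₁ V (D Vᴴ U) = B₁ U (D Uᴴ U) = 0`, giving `B₁ V = 0`. But `B₁ᴴ` is a
combination of products that begin with `U` or `V`, so `B₁ B₁ᴴ = 0`, which forces `B₁ = 0`.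
-/

lemma range_mulVecLin_fromCols {R m n₁ n₂ : Type*} [CommSemiring R] [Fintype n₁] [Fintype n₂]
    (A : Matrix m n₁ R) (B : Matrix m n₂ R) :
    LinearMap.range (fromCols A B).mulVecLin =
      LinearMap.range A.mulVecLin ⊔ LinearMap.range B.mulVecLin := by
  simp only [range_mulVecLin, ← Submodule.span_union, ← Set.Sum.elim_range]
  congr 2
  ext (j | j) <;> rfl

lemma linearIndependent_col_iff_card_le_rank {R m n : Type*} [CommRing R] [Nontrivial R]
    [Fintype n] (A : Matrix m n R) : LinearIndependent R A.col ↔ Fintype.card n ≤ A.rank := by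
  rw [linearIndependent_iff_card_le_finrank_span, A.rank_eq_finrank_span_cols, Set.finrank]

lemma eq_zero_of_mul_eq_zero_of_card_le_rank {K m n p : Type*} [Field K] [Finite m] [Fintype n]
    [Fintype p] {A : Matrix m p K} {X : Matrix p n K} (hX : Fintype.card p ≤ X.rank)
    (hAX : A * X = 0) : A = 0 := by
  have hrank : A.rank = 0 := by
    have := rank_add_rank_le_card_of_mul_eq_zero hAX
    omega
  have hrange : LinearMap.range A.mulVecLin = ⊥ := Submodule.finrank_eq_zero.mp hrank
  classical
  exact toLin'.map_eq_zero_iff.mp (LinearMap.range_eq_bot.mp hrange)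

section IndefiniteDiagonal

open LieAlgebra.Orthogonal

variable {R m n₁ n₂ : Type*} [CommRing R] [DecidableEq n₁] [DecidableEq n₂]

lemma indefiniteDiagonal_eq_fromBlocks : indefiniteDiagonal n₁ n₂ R = fromBlocks 1 0 0 (-1) := by
  rw [← diagonal_one, ← diagonal_one, diagonal_neg, fromBlocks_diagonal]
  rfl

variable [Fintype n₁] [Fintype n₂]

lemma isUnit_indefiniteDiagonal : IsUnit (indefiniteDiagonal n₁ n₂ R) := by
  apply IsUnit.of_mul_eq_one (indefiniteDiagonal n₁ n₂ R)
  simp [indefiniteDiagonal_eq_fromBlocks, fromBlocks_multiply]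

lemma fromCols_mul_indefiniteDiagonal_mul_conjTranspose [StarRing R] (A : Matrix m n₁ R)
    (B : Matrix m n₂ R) :
    fromCols A B * indefiniteDiagonal n₁ n₂ R * (fromCols A B)ᴴ = A * Aᴴ - B * Bᴴ := by
  rw [indefiniteDiagonal_eq_fromBlocks, fromCols_mul_fromBlocks,
    conjTranspose_fromCols_eq_fromRows_conjTranspose, fromCols_mul_fromRows]
  simp [sub_eq_add_neg]

end IndefiniteDiagonal

section StarOrderedField

variable {R m n p : Type*} [Field R] [PartialOrder R] [StarRing R] [StarOrderedRing R]
  [Fintype m] [Fintype n] [Fintype p]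

lemma isUnit_conjTranspose_mul_self [DecidableEq n] {U : Matrix m n R}
    (hU : LinearIndependent R U.col) : IsUnit (Uᴴ * U) := by
  rwa [← linearIndependent_cols_iff_isUnit, linearIndependent_col_iff_card_le_rank,
    rank_conjTranspose_mul_self, ← linearIndependent_col_iff_card_le_rank]

theorem mul_mul_conjTranspose_eq_of_sub_mul_eq_zero [DecidableEq n] {U : Matrix m n R}
    {V : Matrix m p R} {D : Matrix n n R} {D' : Matrix p p R} (hU : LinearIndependent R U.col)
    (hD : IsUnit D) (hcard : Fintype.card p ≤ Fintype.card n)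
    (hEU : (U * D * Uᴴ - V * D' * Vᴴ) * U = 0) : U * D * Uᴴ = V * D' * Vᴴ := by
  have hUV : U * (D * (Uᴴ * U)) = V * (D' * (Vᴴ * U)) := by
    simpa only [Matrix.sub_mul, sub_eq_zero, Matrix.mul_assoc] using hEU
  have hY : IsUnit (D * (Uᴴ * U)) := hD.mul (isUnit_conjTranspose_mul_self hU)
  have hX : Fintype.card p ≤ (D' * (Vᴴ * U)).rank := calc
    Fintype.card p ≤ Fintype.card n := hcard
    _ ≤ U.rank := (linearIndependent_col_iff_card_le_rank U).mp hU
    _ = (V * (D' * (Vᴴ * U))).rank := by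
      rw [← hUV, rank_mul_eq_left_of_isUnit_det _ _ ((isUnit_iff_isUnit_det _).mp hY)]
    _ ≤ (D' * (Vᴴ * U)).rank := rank_mul_le_right _ _
  set E := U * D * Uᴴ - V * D' * Vᴴ with hE
  have hEV : E * V = 0 := eq_zero_of_mul_eq_zero_of_card_le_rank hX <| by
    rw [Matrix.mul_assoc, ← hUV, ← Matrix.mul_assoc, hEU, Matrix.zero_mul]
  rw [← sub_eq_zero, ← hE, ← self_mul_conjTranspose_eq_zero]
  calc
    E * Eᴴ = E * U * (Dᴴ * Uᴴ) - E * V * (D'ᴴ * Vᴴ) := by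
      nth_rw 2 [hE]
      simp only [conjTranspose_sub, conjTranspose_mul, conjTranspose_conjTranspose,
        Matrix.mul_sub, Matrix.mul_assoc]
    _ = 0 := by rw [hEU, hEV, Matrix.zero_mul, Matrix.zero_mul, sub_zero]

open LieAlgebra.Orthogonal in
theorem stationarity_dimension_drop_general {n₁ n₂ p₁ p₂ : Type*} [Fintype n₁] [Fintype n₂]
    [Fintype p₁] [Fintype p₂]
    (hcard : Fintype.card p₁ + Fintype.card p₂ ≤ Fintype.card n₁ + Fintype.card n₂)
    (U₁ : Matrix m n₁ R) (U₂ : Matrix m n₂ R) (V₁ : Matrix m p₁ R) (V₂ : Matrix m p₂ R)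
    (c : R) {B : Matrix m m R} (hB : B = c • (U₁ * U₁ᴴ - V₁ * V₁ᴴ - U₂ * U₂ᴴ + V₂ * V₂ᴴ))
    (h1 : B * U₁ = 0) (h2 : B * U₂ = 0) (hne : B ≠ 0) :
    Module.finrank R ↥(LinearMap.range U₁.mulVecLin ⊔ LinearMap.range U₂.mulVecLin) <
      Fintype.card n₁ + Fintype.card n₂ := by
  classical
  set U := fromCols U₁ U₂ with hUdef
  set V := fromCols V₁ V₂
  have hB' : B = c • (U * indefiniteDiagonal n₁ n₂ R * Uᴴ -
      V * indefiniteDiagonal p₁ p₂ R * Vᴴ) := by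
    rw [hB, fromCols_mul_indefiniteDiagonal_mul_conjTranspose,
      fromCols_mul_indefiniteDiagonal_mul_conjTranspose]
    congr 1
    abel
  have hc : c ≠ 0 := by
    rintro rfl
    exact hne (by rw [hB, zero_smul])
  have hBU : B * U = 0 := by rw [hUdef, mul_fromCols, h1, h2, fromCols_zero]
  rw [hB', smul_mul, smul_eq_zero_iff_right hc] at hBU
  rw [← range_mulVecLin_fromCols, ← Fintype.card_sum]
  by_contra! hrank
  have hU : LinearIndependent R U.col := (linearIndependent_col_iff_card_le_rank U).mpr hrank
  have heq := mul_mul_conjTranspose_eq_of_sub_mul_eq_zero hU isUnit_indefiniteDiagonal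
    (by simpa only [Fintype.card_sum] using hcard) hBU
  exact hne (by rw [hB', heq, sub_self, smul_zero])

end StarOrderedField

/-- Corollary 5 (dimension drop): at a first-order stationary point of the two-task
Meta-LoRA loss with nonzero loss (`B₁ ≠ 0`), the `2k` columns of `Û₁` and `Û₂` are not
linearly independent: `dim(im(Û₁) + im(Û₂)) ≤ 2k − 1`. -/
theorem stationarity_dimension_drop
    (d k : ℕ) (hd : 0 < d) (hk : 0 < k)
    (U₁s U₂s Uh₁ Uh₂ : Matrix (Fin d) (Fin k) ℝ)
    (B₁ : Matrix (Fin d) (Fin d) ℝ)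
    (hB₁ : B₁ = ((1 : ℝ) / 2) • (Uh₁ * Uh₁ᵀ - U₁s * U₁sᵀ - Uh₂ * Uh₂ᵀ + U₂s * U₂sᵀ))
    (h1 : B₁ * Uh₁ = 0) (h2 : B₁ * Uh₂ = 0) (hne : B₁ ≠ 0) :
    Module.finrank ℝ
        ↥(LinearMap.range Uh₁.mulVecLin ⊔ LinearMap.range Uh₂.mulVecLin) ≤
      2 * k - 1 := by
  have hlt := stationarity_dimension_drop_general (by simp) Uh₁ Uh₂ U₁s U₂s (1 / 2 : ℝ)
    (by simpa only [conjTranspose_eq_transpose_of_trivial] using hB₁) h1 h2 hne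
  simp only [Fintype.card_fin] at hlt
  omega
end
end

section
/- Let d, k be positive integers with 2k ≤ d, and let U₁*, U₂*, Û₁, Û₂ ∈ ℝ^{d×k} be such that the concatenated matrix [U₁* U₂*] has rank 2k. Define B₁ = (1/2)·(Û₁(Û₁)ᵀ − U₁*(U₁*)ᵀ − Û₂(Û₂)ᵀ + U₂*(U₂*)ᵀ). If B₁ is positive semidefinite, then rank(Û₁) = k. -/
open Matrix

noncomputable section

/-! Write `A ≼ B` when `B - A` is positive semidefinite, and `Vᵢ` for the candidate factor `Ûᵢ`. If
`A * Aᴴ ≼ B`, then `B x = 0` forces `‖Aᴴ x‖² ≤ xᴴ B x = 0`, so `ker B ⊆ ker Aᴴ` and hence `rank A ≤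
rank B`. Dropping `V₂ * V₂ᴴ` from the stationarity condition gives `U₁ * U₁ᴴ ≼ V₁ * V₁ᴴ + U₂ * U₂ᴴ`;
adding `U₂ * U₂ᴴ` to both sides turns the left side into `[U₁ U₂] * [U₁ U₂]ᴴ`, while the right side
still has rank at most `rank V₁ + rank U₂`. Diversity then leaves no room for `rank V₁` to be
smaller than the width of `U₁`. -/

section RankAdd

variable {m n K : Type*} [Fintype n] [Field K]

theorem matrix_rank_add_le (A B : Matrix m n K) : (A + B).rank ≤ A.rank + B.rank := by
  have range_le : (A + B).mulVecLin.range ≤ A.mulVecLin.range ⊔ B.mulVecLin.range := by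
    simpa only [mulVecLin_add] using LinearMap.range_add_le A.mulVecLin B.mulVecLin
  exact (Submodule.finrank_mono range_le).trans (Submodule.finrank_add_le_finrank_add_finrank _ _)

end RankAdd

section LoewnerRank

variable {m n p q R : Type*} [Fintype n] [Fintype p] [Fintype q]
variable [Field R] [PartialOrder R] [StarRing R] [StarOrderedRing R]

theorem ker_mulVecLin_le_ker_conjTranspose_of_posSemidef_sub [Fintype m]
    {A : Matrix m n R} {B : Matrix m m R} (h : (B - A * Aᴴ).PosSemidef) :
    B.mulVecLin.ker ≤ Aᴴ.mulVecLin.ker := by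
  intro x hx
  have hBx : B *ᵥ x = 0 := hx
  have quadratic_form : star x ⬝ᵥ ((B - A * Aᴴ) *ᵥ x) = -(star (Aᴴ *ᵥ x) ⬝ᵥ (Aᴴ *ᵥ x)) := by
    rw [sub_mulVec, hBx, zero_sub, dotProduct_neg, ← mulVec_mulVec, dotProduct_mulVec,
      star_mulVec, conjTranspose_conjTranspose]
  have nonpos : star (Aᴴ *ᵥ x) ⬝ᵥ (Aᴴ *ᵥ x) ≤ 0 :=
    neg_nonneg.mp (quadratic_form ▸ h.dotProduct_mulVec_nonneg x)
  exact dotProduct_star_self_eq_zero.mp (nonpos.antisymm (dotProduct_star_self_nonneg _))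

theorem rank_le_rank_of_posSemidef_sub_mul_conjTranspose [Fintype m]
    {A : Matrix m n R} {B : Matrix m m R} (h : (B - A * Aᴴ).PosSemidef) :
    A.rank ≤ B.rank := by
  have ker_le := Submodule.finrank_mono (ker_mulVecLin_le_ker_conjTranspose_of_posSemidef_sub h)
  have nullity_A := Aᴴ.mulVecLin.finrank_range_add_finrank_ker
  have nullity_B := B.mulVecLin.finrank_range_add_finrank_ker
  rw [← rank_conjTranspose A, rank, rank]
  lia

theorem rank_fromCols_le_of_posSemidef [Finite m]
    {U : Matrix m n R} {V : Matrix m p R} {W : Matrix m q R}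
    (h : (V * Vᴴ + W * Wᴴ - U * Uᴴ).PosSemidef) :
    (fromCols U W).rank ≤ V.rank + W.rank := by
  cases nonempty_fintype m
  have gram : fromCols U W * (fromCols U W)ᴴ = U * Uᴴ + W * Wᴴ := by
    rw [conjTranspose_fromCols_eq_fromRows_conjTranspose, fromCols_mul_fromRows]
  have dominated :
      (V * Vᴴ + W * (Wᴴ + Wᴴ) - fromCols U W * (fromCols U W)ᴴ).PosSemidef := by
    convert h using 1
    rw [gram, Matrix.mul_add]
    abel
  calc (fromCols U W).rank
      ≤ (V * Vᴴ + W * (Wᴴ + Wᴴ)).rank :=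
        rank_le_rank_of_posSemidef_sub_mul_conjTranspose dominated
    _ ≤ (V * Vᴴ).rank + (W * (Wᴴ + Wᴴ)).rank := matrix_rank_add_le _ _
    _ ≤ V.rank + W.rank := add_le_add (rank_mul_le_left _ _) (rank_mul_le_left _ _)

-- `hdiv`: the columns of `U₁` are linearly independent modulo the column space of `U₂`.
theorem stationarity_full_rank_general [Finite m]
    (U₁ V₁ : Matrix m n R) (U₂ : Matrix m p R) (V₂ : Matrix m q R)
    (hdiv : Fintype.card n + U₂.rank ≤ (fromCols U₁ U₂).rank)
    (hpsd : ((1 / 2 : R) • (V₁ * V₁ᴴ - U₁ * U₁ᴴ - V₂ * V₂ᴴ + U₂ * U₂ᴴ)).PosSemidef) :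
    V₁.rank = Fintype.card n := by
  have dominated : (V₁ * V₁ᴴ + U₂ * U₂ᴴ - U₁ * U₁ᴴ).PosSemidef := by
    convert (hpsd.add hpsd).add (posSemidef_self_mul_conjTranspose V₂) using 1
    rw [← add_smul, add_halves, one_smul]
    abel
  have rank_le := hdiv.trans (rank_fromCols_le_of_posSemidef dominated)
  exact le_antisymm V₁.rank_le_card_width (le_of_add_le_add_right rank_le)

end LoewnerRank

/-- Lemma 7 (full rank of the adapters): under task diversity, if the stationarity
matrix `B₁` is positive semidefinite then `rank(Û₁) = k`. -/
theorem stationarity_full_rank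
    (d k : ℕ) (hd : 0 < d) (hk : 0 < k) (hkd : 2 * k ≤ d)
    (U₁s U₂s Uh₁ Uh₂ : Matrix (Fin d) (Fin k) ℝ)
    (hdiv : (Matrix.fromCols U₁s U₂s).rank = 2 * k)
    (B₁ : Matrix (Fin d) (Fin d) ℝ)
    (hB₁ : B₁ = ((1 : ℝ) / 2) • (Uh₁ * Uh₁ᵀ - U₁s * U₁sᵀ - Uh₂ * Uh₂ᵀ + U₂s * U₂sᵀ))
    (hpsd : B₁.PosSemidef) :
    Uh₁.rank = k := by
  have card_add_rank_le : Fintype.card (Fin k) + U₂s.rank ≤ (fromCols U₁s U₂s).rank := by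
    linarith [U₂s.rank_le_width, Fintype.card_fin k]
  simpa using stationarity_full_rank_general U₁s Uh₁ U₂s Uh₂ card_add_rank_le
    (by simpa only [hB₁, conjTranspose_eq_transpose_of_trivial] using hpsd)
end
end

section
/- Let d, k, T be positive integers with T ≥ 3 and kT ≤ d, A* ∈ ℝ^{d×d}, and U_t* ∈ ℝ^{d×k} for t = 1,…,T satisfying the task-diversity assumption. Suppose Â ∈ ℝ^{d×d} and Û_1,…,Û_T ∈ ℝ^{d×k} satisfy 𝓛(Â, Û_1,…,Û_T) = 0, where 𝓛 is the Meta-LoRA loss. Then the column space of Û_t equals the column space of U_t* for every t ∈ {1,…,T}, i.e., im(Û_t) = im(U_t*) for all t. -/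
open Matrix BigOperators

noncomputable section

section ModularLattice

variable {ι α : Type*} [CompleteLattice α] [IsModularLattice α] {a b : ι → α}

theorem sup_inf_sup_eq_of_iSupIndep (ha : iSupIndep a) {r s t : ι} (hrs : r ≠ s) (hrt : r ≠ t) :
    (a t ⊔ a r) ⊓ (a t ⊔ a s) = a t := by
  have hdisj : Disjoint (a r) (a t ⊔ a s) :=
    (ha r).mono_right (sup_le (le_iSup₂_of_le t hrt.symm le_rfl) (le_iSup₂_of_le s hrs.symm le_rfl))
  rw [sup_inf_assoc_of_le _ le_sup_left, hdisj.eq_bot, sup_bot_eq]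

theorem eq_of_iSupIndep_of_sup_eq_sup (hι : 3 ≤ ENat.card ι) (ha : iSupIndep a)
    (h : ∀ s t, s ≠ t → b s ⊔ b t = a s ⊔ a t) : b = a := by
  have hle : ∀ t, b t ≤ a t := fun t => by
    obtain ⟨s, hst, -⟩ := ENat.exists_ne_ne_of_three_le hι t t
    obtain ⟨r, hrs, hrt⟩ := ENat.exists_ne_ne_of_three_le hι s t
    rw [← sup_inf_sup_eq_of_iSupIndep ha hrs hrt, ← h t r hrt.symm, ← h t s hst.symm]
    exact le_inf le_sup_left le_sup_left
  funext t
  obtain ⟨s, hst, -⟩ := ENat.exists_ne_ne_of_three_le hι t t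
  refine eq_of_le_of_inf_le_of_sup_le (z := a s) (hle t) ?_ ?_
  · exact (ha.pairwiseDisjoint hst.symm).le_bot.trans bot_le
  · rw [← h t s hst.symm]
    exact sup_le le_sup_left ((hle s).trans le_sup_right)

end ModularLattice

section ColumnSpace

variable {m n p R : Type*} [CommSemiring R]

theorem range_mulVecLin_mul_le [Fintype n] [Fintype p] (M : Matrix m n R) (N : Matrix n p R) :
    LinearMap.range (M * N).mulVecLin ≤ LinearMap.range M.mulVecLin := by
  rw [mulVecLin_mul]
  exact LinearMap.range_comp_le_range _ _

theorem range_mulVecLin_fromCols_s19 [Fintype n] [Fintype p] (M : Matrix m n R) (N : Matrix m p R) :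
    LinearMap.range (fromCols M N).mulVecLin =
      LinearMap.range M.mulVecLin ⊔ LinearMap.range N.mulVecLin := by
  have hcol : (fromCols M N).col = Sum.elim M.col N.col := by
    ext (_ | _) _ <;> rfl
  simp only [range_mulVecLin, hcol, Set.Sum.elim_range, Submodule.span_union]

theorem range_mulVecLin_eq_of_mul_eq_mul [Fintype m] [Fintype n] [DecidableEq n] [Fintype p]
    {M N : Matrix m n R} {P Q : Matrix n p R} {W : Matrix n m R} {X : Matrix p n R}
    (hW : W * M = 1) (hX : P * X = 1) (h : M * P = N * Q) :
    LinearMap.range N.mulVecLin = LinearMap.range M.mulVecLin := by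
  have hM : M = N * (Q * X) := by
    rw [← Matrix.mul_assoc, ← h, Matrix.mul_assoc, hX, Matrix.mul_one]
  have hinv : (W * N) * (Q * X) = 1 := by rw [Matrix.mul_assoc, ← hM, hW]
  have hN : N = M * (W * N) := by
    rw [mul_eq_one_comm] at hinv
    calc N = N * ((Q * X) * (W * N)) := by rw [hinv, Matrix.mul_one]
      _ = M * (W * N) := by rw [← Matrix.mul_assoc, ← hM]
  apply le_antisymm
  · rw [hN]
    exact range_mulVecLin_mul_le M _
  · rw [hM]
    exact range_mulVecLin_mul_le N _

theorem exists_left_inverse_of_rank_eq_card {K : Type*} [Field K] [Fintype m] [Fintype n]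
    [DecidableEq n] {M : Matrix m n K} (h : M.rank = Fintype.card n) :
    ∃ W : Matrix n m K, W * M = 1 := by
  rw [← vecMul_surjective_iff_exists_left_inverse]
  have hrange : LinearMap.range Mᵀ.mulVecLin = ⊤ := by
    apply Submodule.eq_top_of_finrank_eq
    rw [Module.finrank_fintype_fun_eq_card, ← h, ← rank_transpose, rank]
  intro v
  obtain ⟨w, hw⟩ := LinearMap.range_eq_top.mp hrange v
  exact ⟨w, by rw [← hw, mulVecLin_apply, mulVec_transpose]⟩

end ColumnSpace

/-- `W` is a biorthogonal system for `U`: stacking the blocks `W t` vertically gives a left inverse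
of the horizontal concatenation of the blocks `U t`. Over a field, `U` has a biorthogonal system
if and only if the columns of all its blocks together are linearly independent, so this is the task
diversity condition over a general ring, where the blocks may have different widths. -/
structure IsBiorthogonal {ι m R : Type*} {κ : ι → Type*} [CommRing R] [Fintype m]
    [∀ t, DecidableEq (κ t)] (W : ∀ t, Matrix (κ t) m R) (U : ∀ t, Matrix m (κ t) R) : Prop where
  mul_self : ∀ t, W t * U t = 1
  mul_of_ne : ∀ s t, s ≠ t → W s * U t = 0

namespace IsBiorthogonal

theorem of_mul_eq_one {ι κ m R : Type*} [CommRing R] [Fintype m] [DecidableEq ι] [DecidableEq κ]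
    {W : Matrix (ι × κ) m R} {U : ι → Matrix m κ R}
    (h : W * Matrix.of (fun i (p : ι × κ) => U p.1 i p.2) = 1) :
    IsBiorthogonal (fun t => W.submatrix (Prod.mk t) id) U where
  mul_self t := by
    ext a b
    simpa [mul_apply, one_apply] using congr_fun₂ h (t, a) (t, b)
  mul_of_ne s t hst := by
    ext a b
    simpa [mul_apply, one_apply, hst] using congr_fun₂ h (s, a) (t, b)

variable {ι m n R : Type*} {κ : ι → Type*} [CommRing R] [Fintype m] [∀ t, DecidableEq (κ t)]
  {W : ∀ t, Matrix (κ t) m R} {U : ∀ t, Matrix m (κ t) R}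

theorem transpose (h : IsBiorthogonal W U) :
    IsBiorthogonal (fun t => (U t)ᵀ) (fun t => (W t)ᵀ) where
  mul_self t := by rw [← transpose_mul, h.mul_self, transpose_one]
  mul_of_ne s t hst := by rw [← transpose_mul, h.mul_of_ne t s hst.symm, transpose_zero]

variable [∀ t, Fintype (κ t)]

theorem iSupIndep_range (h : IsBiorthogonal W U) :
    iSupIndep fun t => LinearMap.range (U t).mulVecLin := by
  intro s
  have hker : (⨆ t, ⨆ (_ : t ≠ s), LinearMap.range (U t).mulVecLin) ≤
      LinearMap.ker (W s).mulVecLin := by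
    refine iSup₂_le fun t hts => LinearMap.range_le_ker_iff.mpr ?_
    rw [← mulVecLin_mul, h.mul_of_ne s t hts.symm, mulVecLin_zero]
  refine Disjoint.mono_right hker (Submodule.disjoint_def.mpr ?_)
  rintro _ ⟨v, rfl⟩ hv
  have hv0 : v = 0 := by simpa [h.mul_self] using hv
  rw [hv0, map_zero]

theorem range_sup_range_eq [Fintype n] {U' : ∀ t, Matrix m (κ t) R} {V V' : ∀ t, Matrix (κ t) n R}
    {X : ∀ t, Matrix n (κ t) R} (hU : IsBiorthogonal W U) (hV : IsBiorthogonal V X) {s t : ι}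
    (hst : s ≠ t) (h : U s * V s - U t * V t = U' s * V' s - U' t * V' t) :
    LinearMap.range (U' s).mulVecLin ⊔ LinearMap.range (U' t).mulVecLin =
      LinearMap.range (U s).mulVecLin ⊔ LinearMap.range (U t).mulVecLin := by
  have hleft : fromRows (W s) (W t) * fromCols (U s) (U t) = 1 := by
    simp [hU.mul_self, hU.mul_of_ne, hst, hst.symm]
  have hright : fromRows (V s) (-V t) * fromCols (X s) (-X t) = 1 := by
    simp [hV.mul_self, hV.mul_of_ne, hst, hst.symm]
  have hmul : fromCols (U s) (U t) * fromRows (V s) (-V t) =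
      fromCols (U' s) (U' t) * fromRows (V' s) (-V' t) := by
    simpa [fromCols_mul_fromRows, ← sub_eq_add_neg] using h
  simpa only [range_mulVecLin_fromCols_s19] using range_mulVecLin_eq_of_mul_eq_mul hleft hright hmul

end IsBiorthogonal

theorem exists_isBiorthogonal_of_rank_eq_card {ι κ m K : Type*} [Field K] [Fintype ι] [Fintype κ]
    [Fintype m] [DecidableEq κ] {U : ι → Matrix m κ K}
    (h : (Matrix.of fun i (p : ι × κ) => U p.1 i p.2).rank = Fintype.card (ι × κ)) :
    ∃ W : ι → Matrix κ m K, IsBiorthogonal W U := by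
  classical
  obtain ⟨W, hW⟩ := exists_left_inverse_of_rank_eq_card h
  exact ⟨_, .of_mul_eq_one hW⟩

theorem metaLoRA_column_space_recovery_general {ι m n R : Type*} {κ : ι → Type*} [CommRing R]
    [Fintype m] [Fintype n] [∀ t, Fintype (κ t)] [∀ t, DecidableEq (κ t)] (hι : 3 ≤ ENat.card ι)
    {A A' : Matrix m n R} {U U' : ∀ t, Matrix m (κ t) R} {V V' : ∀ t, Matrix (κ t) n R}
    {W : ∀ t, Matrix (κ t) m R} {X : ∀ t, Matrix n (κ t) R}
    (hU : IsBiorthogonal W U) (hV : IsBiorthogonal V X)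
    (h : ∀ t, A + U t * V t = A' + U' t * V' t) (t : ι) :
    LinearMap.range (U' t).mulVecLin = LinearMap.range (U t).mulVecLin := by
  have hdiff : ∀ r s, U r * V r - U s * V s = U' r * V' r - U' s * V' s := fun r s => by
    rw [← add_sub_add_left_eq_sub _ _ A, h r, h s, add_sub_add_left_eq_sub]
  have hpair : ∀ r s, r ≠ s →
      LinearMap.range (U' r).mulVecLin ⊔ LinearMap.range (U' s).mulVecLin =
        LinearMap.range (U r).mulVecLin ⊔ LinearMap.range (U s).mulVecLin :=
    fun r s hrs => hU.range_sup_range_eq hV hrs (hdiff r s)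
  exact congr_fun (eq_of_iSupIndep_of_sup_eq_sup hι hU.iSupIndep_range hpair) t

theorem add_mul_transpose_eq_of_loss_eq_zero {ι m : Type*} {κ κ' : ι → Type*} [Fintype ι]
    [Fintype m] [∀ t, Fintype (κ t)] [∀ t, Fintype (κ' t)] {A A' : Matrix m m ℝ}
    {U : ∀ t, Matrix m (κ t) ℝ} {U' : ∀ t, Matrix m (κ' t) ℝ}
    (h : (1 / 2) * ∑ t, frobSq (A + U t * (U t)ᵀ - A' - U' t * (U' t)ᵀ) = 0) (t : ι) :
    A + U t * (U t)ᵀ = A' + U' t * (U' t)ᵀ := by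
  have hsum : ∑ t, frobSq (A + U t * (U t)ᵀ - A' - U' t * (U' t)ᵀ) = 0 := by linarith
  have hterm := (Finset.sum_eq_zero_iff_of_nonneg fun _ _ => frobSq_nonneg _).mp hsum t
    (Finset.mem_univ t)
  rwa [frobSq_eq_zero_iff, sub_sub, sub_eq_zero] at hterm

/-- With `T ≥ 3` diverse tasks, any zero of the Meta-LoRA loss recovers the ground-truth
column spaces: `im(Ûₜ) = im(Uₜ*)` for every task `t`. -/
theorem metaLoRA_column_space_recovery
    (d k T : ℕ) (hd : 0 < d) (hk : 0 < k) (hT : 3 ≤ T) (hkT : k * T ≤ d)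
    (Astar : Matrix (Fin d) (Fin d) ℝ)
    (Ustar : Fin T → Matrix (Fin d) (Fin k) ℝ)
    (hdiv : (Matrix.of fun i (p : Fin T × Fin k) => Ustar p.1 i p.2).rank = k * T)
    (Ahat : Matrix (Fin d) (Fin d) ℝ)
    (Uhat : Fin T → Matrix (Fin d) (Fin k) ℝ)
    (hloss : (1 / 2) * ∑ t, frobSq
        (Astar + Ustar t * (Ustar t)ᵀ - Ahat - Uhat t * (Uhat t)ᵀ) = 0) :
    ∀ t : Fin T,
      LinearMap.range (Uhat t).mulVecLin = LinearMap.range (Ustar t).mulVecLin := by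
  obtain ⟨W, hW⟩ := exists_isBiorthogonal_of_rank_eq_card (hdiv.trans (by simp [mul_comm]))
  exact metaLoRA_column_space_recovery_general (by simpa using hT) hW hW.transpose
    (add_mul_transpose_eq_of_loss_eq_zero hloss)
end
end
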